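/- Let n ≥ 2 and let K ⊆ ℝⁿ be a bounded set that is not contained in any 1-dimensional linear subspace. Then K^◇◇ = cyl(K), i.e., the double sine polar of K equals the cylindrical hull of K. -/

import Mathlib

/-!
Up to scaling, points of the sine polar of `K` are the same thing as solid cylinders containing `K`:
for `r > 0`, `K ⊆ C⁻(u,r)` if and only if `u / r ∈ K^◇` (`inv_smul_mem_sinePolar_iff`), and
`x ∈ C⁻(u,r)` if and only if `[x, u / r] ≤ 1`. Every nonzero point of `K^◇` has the form `u / r` with
`u` a unit vector, and the point `0` imposes no condition. Hence the conditions defining `K^◇◇` and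
`cyl(K)` coincide.
-/

open MeasureTheory Metric Set
open scoped RealInnerProductSpace ENNReal

noncomputable section

/-- `[x,y]`: the area of the parallelogram spanned by `x` and `y`. -/
def sinePair {n : ℕ} (x y : EuclideanSpace ℝ (Fin n)) : ℝ :=
  Real.sqrt (‖x‖ ^ 2 * ‖y‖ ^ 2 - ⟪x, y⟫ ^ 2)

/-- `ω_q = π^{q/2}/Γ(1+q/2)`. -/
def omegaVol (q : ℝ) : ℝ := Real.pi ^ (q / 2) / Real.Gamma (1 + q / 2)

/-- The rotation invariant probability measure on the unit sphere `S^{n-1}`. -/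
def sphereProb (n : ℕ) : Measure (sphere (0 : EuclideanSpace ℝ (Fin n)) 1) :=
  ((volume : Measure (EuclideanSpace ℝ (Fin n))).toSphere univ)⁻¹ •
    (volume : Measure (EuclideanSpace ℝ (Fin n))).toSphere

/-- The radial function of a set star-shaped about the origin. -/
def radialFn {n : ℕ} (K : Set (EuclideanSpace ℝ (Fin n))) (u : EuclideanSpace ℝ (Fin n)) : ℝ :=
  sSup {r : ℝ | 0 ≤ r ∧ r • u ∈ K}

/-- `K` is star-shaped about the origin. -/
def IsStarShaped {n : ℕ} (K : Set (EuclideanSpace ℝ (Fin n))) : Prop :=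
  0 ∈ K ∧ ∀ x ∈ K, ∀ t : ℝ, 0 ≤ t → t ≤ 1 → t • x ∈ K

/-- `K` is a star body: star-shaped about the origin, with radial function positive and
continuous on the unit sphere, and `K = {r • u : u ∈ S^{n-1}, 0 ≤ r ≤ ρ_K(u)}`. -/
def IsStarBody {n : ℕ} (K : Set (EuclideanSpace ℝ (Fin n))) : Prop :=
  IsStarShaped K ∧
  (∀ u ∈ sphere (0 : EuclideanSpace ℝ (Fin n)) 1, 0 < radialFn K u) ∧
  ContinuousOn (radialFn K) (sphere (0 : EuclideanSpace ℝ (Fin n)) 1) ∧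
  ∀ u ∈ sphere (0 : EuclideanSpace ℝ (Fin n)) 1, ∀ r : ℝ, 0 ≤ r →
    (r • u ∈ K ↔ r ≤ radialFn K u)

/-- The constant `c̃_{n,p}`. -/
def tildeC (n : ℕ) (p : ℝ) : ℝ :=
  ((n : ℝ) - 1) * omegaVol ((n : ℝ) - 1) * omegaVol ((n : ℝ) + p - 2) /
    (((n : ℝ) + p) * omegaVol (n : ℝ) * omegaVol ((n : ℝ) + p - 3))

/-- The polar body `Λ_p°K` of the `L_p`-sine centroid body of `K`. -/
def sineCentroidPolar (n : ℕ) (p : ℝ) (K : Set (EuclideanSpace ℝ (Fin n))) :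
    Set (EuclideanSpace ℝ (Fin n)) :=
  {x | ∫ y in K, sinePair x y ^ p ≤ tildeC n p * (volume K).toReal}

/-- The sine polar body `K^◇`. -/
def sinePolar {n : ℕ} (K : Set (EuclideanSpace ℝ (Fin n))) : Set (EuclideanSpace ℝ (Fin n)) :=
  {x | ∀ y ∈ K, sinePair x y ≤ 1}

/-- The closed solid cylinder `C⁻(u,r)`. -/
def solidCylinder {n : ℕ} (u : EuclideanSpace ℝ (Fin n)) (r : ℝ) :
    Set (EuclideanSpace ℝ (Fin n)) := {x | sinePair x u ≤ r}

/-- `K ∈ C_e^n`: an origin-symmetric convex body that is an intersection of closed solid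
cylinders. -/
def IsCylBody {n : ℕ} (K : Set (EuclideanSpace ℝ (Fin n))) : Prop :=
  IsCompact K ∧ Convex ℝ K ∧ (interior K).Nonempty ∧ (∀ x ∈ K, -x ∈ K) ∧
  ∃ I : Set (EuclideanSpace ℝ (Fin n) × ℝ),
    (∀ c ∈ I, c.1 ∈ sphere (0 : EuclideanSpace ℝ (Fin n)) 1 ∧ 0 < c.2) ∧
    K = ⋂ c ∈ I, solidCylinder c.1 c.2

/-- The cylindrical hull of a set. -/
def cylHull {n : ℕ} (E : Set (EuclideanSpace ℝ (Fin n))) : Set (EuclideanSpace ℝ (Fin n)) :=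
  ⋂ c ∈ {c : EuclideanSpace ℝ (Fin n) × ℝ |
      c.1 ∈ sphere (0 : EuclideanSpace ℝ (Fin n)) 1 ∧ 0 < c.2 ∧ E ⊆ solidCylinder c.1 c.2},
    solidCylinder c.1 c.2

/-- The cylindrical support function `c_K`. -/
def cylSupport {n : ℕ} (K : Set (EuclideanSpace ℝ (Fin n))) (x : EuclideanSpace ℝ (Fin n)) : ℝ :=
  sSup ((fun y => sinePair x y) '' K)

/-- The support function `h_K`. -/
def suppFn {n : ℕ} (K : Set (EuclideanSpace ℝ (Fin n))) (x : EuclideanSpace ℝ (Fin n)) : ℝ :=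
  sSup ((fun y => ⟪x, y⟫) '' K)

/-- `[·,·]` is absolutely homogeneous in each argument; only nonnegative factors are needed. -/
theorem sinePair_smul_right {n : ℕ} (x y : EuclideanSpace ℝ (Fin n)) {t : ℝ} (ht : 0 ≤ t) :
    sinePair x (t • y) = t * sinePair x y := by
  unfold sinePair
  rw [norm_smul, inner_smul_right, Real.norm_of_nonneg ht,
    show ‖x‖ ^ 2 * (t * ‖y‖) ^ 2 - (t * ⟪x, y⟫) ^ 2
      = t ^ 2 * (‖x‖ ^ 2 * ‖y‖ ^ 2 - ⟪x, y⟫ ^ 2) by ring,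
    Real.sqrt_mul (sq_nonneg t), Real.sqrt_sq ht]

theorem sinePair_comm {n : ℕ} (x y : EuclideanSpace ℝ (Fin n)) :
    sinePair x y = sinePair y x := by
  unfold sinePair
  rw [real_inner_comm, mul_comm]

theorem sinePair_zero_right {n : ℕ} (x : EuclideanSpace ℝ (Fin n)) : sinePair x 0 = 0 := by
  simp [sinePair]

/-- The dictionary between points and cylinders: for `r > 0`, the cylinder `C⁻(u,r)` contains `E`
exactly when the point `r⁻¹ • u` lies in the sine polar of `E`. -/
theorem inv_smul_mem_sinePolar_iff {n : ℕ} {E : Set (EuclideanSpace ℝ (Fin n))}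
    {u : EuclideanSpace ℝ (Fin n)} {r : ℝ} (hr : 0 < r) :
    r⁻¹ • u ∈ sinePolar E ↔ E ⊆ solidCylinder u r := by
  refine forall₂_congr fun y _ => ?_
  change sinePair (r⁻¹ • u) y ≤ 1 ↔ sinePair y u ≤ r
  rw [sinePair_comm, sinePair_smul_right _ _ (inv_nonneg.2 hr.le), inv_mul_le_iff₀ hr, mul_one]

/-- the double sine polar equals the cylindrical hull. -/
theorem double_sinePolar_eq_cylHull {n : ℕ} (hn : 2 ≤ n) {K : Set (EuclideanSpace ℝ (Fin n))}
    (hb : Bornology.IsBounded K)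
    (h1 : ∀ v : EuclideanSpace ℝ (Fin n), ¬ K ⊆ ↑(Submodule.span ℝ {v})) :
    sinePolar (sinePolar K) = cylHull K := by
  ext x
  simp only [cylHull, mem_iInter, mem_ofPred_eq, Prod.forall]
  constructor
  · rintro hx u r ⟨-, hr, hK⟩
    have h := hx _ ((inv_smul_mem_sinePolar_iff hr).2 hK)
    rwa [sinePair_smul_right _ _ (inv_nonneg.2 hr.le), inv_mul_le_iff₀ hr, mul_one] at h
  · intro hx y hy
    rcases eq_or_ne y 0 with rfl | hy0
    · rw [sinePair_zero_right]
      exact zero_le_one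
    -- A nonzero `y ∈ K^◇` encodes the cylinder with axis direction `y / ‖y‖` and radius `1 / ‖y‖`.
    have hpos : 0 < ‖y‖ := norm_pos_iff.2 hy0
    have hy' : (‖y‖⁻¹)⁻¹ • (‖y‖⁻¹ • y) = y := by
      rw [inv_inv, smul_inv_smul₀ hpos.ne']
    have hK : K ⊆ solidCylinder (‖y‖⁻¹ • y) ‖y‖⁻¹ := by
      rw [← inv_smul_mem_sinePolar_iff (inv_pos.2 hpos), hy']
      exact hy
    have hu : ‖y‖⁻¹ • y ∈ sphere (0 : EuclideanSpace ℝ (Fin n)) 1 := by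
      rw [mem_sphere_zero_iff_norm, norm_smul, norm_inv, norm_norm, inv_mul_cancel₀ hpos.ne']
    have h : sinePair x (‖y‖⁻¹ • y) ≤ ‖y‖⁻¹ := hx _ _ ⟨hu, inv_pos.2 hpos, hK⟩
    rw [sinePair_smul_right _ _ (inv_nonneg.2 hpos.le)] at h
    exact (mul_le_iff_le_one_right (inv_pos.2 hpos)).1 h
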